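/- arXiv:math/0607461 — 2 statements merged into one kernel-verified Lean document; each statement's English description precedes it below -/
import Mathlib

section
/- Under Assumption 1, let 0 ≤ t̄ < t̂ ≤ T and let u : [t̄,t̂) → ℝⁿ be continuous with ∇ₓf(t,u(t)) = 0 for every t ∈ [t̄,t̂). Define K := {x ∈ ℝⁿ : there exists a sequence s_k ↗ t̂ with u(s_k) → x}. Then K is nonempty, compact and connected, and every x ∈ K is a critical point of f(t̂,·). If, in addition, t̂ < T, det ∇²ₓf(t,u(t)) ≠ 0 for every t ∈ [t̄,t̂), and there is no η > 0 and no continuous extension ũ : [t̄, t̂+η) → ℝⁿ of u satisfying ∇ₓf(t,ũ(t)) = 0 and det ∇²ₓf(t,ũ(t)) ≠ 0 on [t̄, t̂+η), then det ∇²ₓf(t̂,x) = 0 for every x ∈ K. -/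
open Set Filter Topology
open scoped RealInnerProductSpace

/-!
Let `G t = ∇ₓf(t, ·)`. Coercivity confines the zeros of `G t` to a fixed ball, so `K` is the cluster
set, along `t ↗ t̂`, of a continuous curve with values in a compact set. Such a set is nonempty and
compact, and it is connected because a separation of it by open sets would eventually separate the
curve itself. Its points are zeros of `G t̂` by continuity.

If the Hessian is invertible at some `x ∈ K`, then `x` is an isolated zero of `G t̂`, hence an
isolated point of the connected set `K`; thus `K = {x}` and `u t → x`. The implicit function theorem
at `(t̂, x)` then continues `u` beyond `t̂` through nondegenerate zeros.
-/

section ClusterSet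

variable {α X : Type*} [TopologicalSpace X] {l : Filter α} {u : α → X} {B : Set X}

/-- The cluster set of `u` along `l`: all limits of `u` along filters finer than `l`. -/
def clusterSet (l : Filter α) (u : α → X) : Set X :=
  {x | MapClusterPt x l u}

theorem nonempty_clusterSet [l.NeBot] (hB : IsCompact B) (huB : ∀ᶠ t in l, u t ∈ B) :
    (clusterSet l u).Nonempty :=
  let ⟨x, _, hx⟩ := hB.exists_mapClusterPt_of_frequently huB.frequently
  ⟨x, hx⟩

theorem isCompact_clusterSet [T2Space X] (hB : IsCompact B) (huB : ∀ᶠ t in l, u t ∈ B) :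
    IsCompact (clusterSet l u) :=
  hB.of_isClosed_subset isClosed_setOfPred_clusterPt
    fun _ hx => hB.isClosed.mem_of_mapClusterPt hx huB

theorem clusterSet_subset_closure {s : Set X} (hs : ∀ᶠ t in l, u t ∈ s) :
    clusterSet l u ⊆ closure s :=
  fun _ hx => isClosed_closure.mem_of_mapClusterPt hx (hs.mono fun _ ht => subset_closure ht)

theorem isPreconnected_clusterSet [T2Space X] (hB : IsCompact B) (huB : ∀ᶠ t in l, u t ∈ B)
    (hl : ∀ s ∈ l, ∃ t ∈ l, t ⊆ s ∧ IsPreconnected (u '' t)) :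
    IsPreconnected (clusterSet l u) := by
  have hK : IsCompact (clusterSet l u) := isCompact_clusterSet hB huB
  rw [isPreconnected_iff_subset_of_fully_disjoint_closed hK.isClosed]
  intro P Q hP hQ hPQ hd
  obtain ⟨U, V, hU, hV, hPU, hQV, hUV⟩ :=
    SeparatedNhds.of_isCompact_isCompact (hK.inter_right hP) (hK.inter_right hQ)
      (hd.mono inter_subset_right inter_subset_right)
  have hKUV : clusterSet l u ⊆ U ∪ V := fun x hx =>
    (hPQ hx).imp (fun h => hPU ⟨hx, h⟩) fun h => hQV ⟨hx, h⟩
  have hlUV : ∀ᶠ t in l, u t ∈ U ∪ V :=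
    (hB.tendsto_nhdsSet_of_mapClusterPt huB fun _ _ hx => hx).eventually
      ((hU.union hV).mem_nhdsSet.2 hKUV)
  obtain ⟨s, hsl, hs, hspre⟩ := hl _ hlUV
  refine (hspre.subset_or_subset hU hV hUV (image_subset_iff.2 hs)).imp (fun h x hx => ?_)
    fun h x hx => ?_
  · have hxV : x ∉ V := disjoint_left.1 (hUV.closure_left hV) <|
      clusterSet_subset_closure (mem_of_superset hsl (image_subset_iff.1 h)) hx
    exact (hPQ hx).resolve_right fun hxQ => hxV (hQV ⟨hx, hxQ⟩)
  · have hxU : x ∉ U := disjoint_right.1 (hUV.closure_right hU) <|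
      clusterSet_subset_closure (mem_of_superset hsl (image_subset_iff.1 h)) hx
    exact (hPQ hx).resolve_left fun hxP => hxU (hPU ⟨hx, hxP⟩)

theorem tendsto_nhds_of_not_accPt_clusterSet [T1Space X] (hB : IsCompact B)
    (huB : ∀ᶠ t in l, u t ∈ B) (hpre : IsPreconnected (clusterSet l u)) {x : X}
    (hx : x ∈ clusterSet l u) (hiso : ¬ AccPt x (𝓟 (clusterSet l u))) :
    Tendsto u l (𝓝 x) := by
  have hsub : (clusterSet l u).Subsingleton :=
    not_nontrivial_iff.1 fun hnt => hiso (hpre.preperfect_of_nontrivial hnt x hx)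
  exact hB.tendsto_nhds_of_unique_mapClusterPt huB fun y _ hy => hsub hy hx

theorem apply_eq_of_mapClusterPt {P Y : Type*} [TopologicalSpace P] [TopologicalSpace Y]
    [T2Space Y] {G : P → X → Y} {S : Set P} {l : Filter P} {u : P → X} {p : P} {x : X} {y : Y}
    (hG : ContinuousWithinAt (Function.uncurry G) (S ×ˢ univ) (p, x)) (hl : l ≤ 𝓝[S] p)
    (hu : ∀ᶠ t in l, G t (u t) = y) (hx : MapClusterPt x l u) : G p x = y := by
  obtain ⟨F, hFl, hFx⟩ := mapClusterPt_iff_ultrafilter.1 hx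
  have hgraph : Tendsto (fun t => (t, u t)) F (𝓝[S ×ˢ univ] (p, x)) := by
    rw [nhdsWithin_prod_eq, nhdsWithin_univ]
    exact (tendsto_id'.2 (hFl.trans hl)).prodMk hFx
  exact tendsto_nhds_unique (hG.tendsto.comp hgraph)
    (tendsto_const_nhds.congr' (EventuallyEq.symm (hFl hu)))

end ClusterSet

section LeftLimitSet

variable {α X : Type*} [TopologicalSpace X] {u : α → X} {a b : α}

section LinearOrder

variable [LinearOrder α] [TopologicalSpace α] [OrderTopology α]

theorem exists_strictMono_tendsto_of_le_nhdsLT {l : Filter α} [l.NeBot] [l.IsCountablyGenerated]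
    {s : Set α} (hl : l ≤ 𝓝[<] b) (hs : s ∈ l) :
    ∃ φ : ℕ → α, (∀ k, φ k ∈ s) ∧ StrictMono φ ∧ Tendsto φ atTop l := by
  obtain ⟨ψ, hψl, hψ⟩ := exists_seq_forall_of_frequently
    (Eventually.and hs (hl self_mem_nhdsWithin : ∀ᶠ t in l, t < b)).frequently
  obtain ⟨g, hg | hg⟩ := exists_increasing_or_nonincreasing_subseq (· < ·) ψ
  · exact ⟨ψ ∘ g, fun k => (hψ (g k)).1, fun m n hmn => hg m n hmn,
      hψl.comp g.strictMono.tendsto_atTop⟩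
  · have hlim : Tendsto (ψ ∘ g) atTop (𝓝 b) :=
      (hψl.comp g.strictMono.tendsto_atTop).mono_right (hl.trans nhdsWithin_le_nhds)
    have hb : b ≤ ψ (g 0) := le_of_tendsto hlim <|
      (eventually_gt_atTop 0).mono fun k hk => not_lt.1 (hg 0 k hk)
    exact absurd (hψ (g 0)).2 hb.not_gt

/-- The set `K` of limits of `u (s k)` along nondecreasing sequences `s` in `[a, b)` with
limit `b`. -/
def leftLimitSet (u : α → X) (a b : α) : Set X :=
  {x | ∃ s : ℕ → α, (∀ k, s k ∈ Ico a b) ∧ Monotone s ∧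
    Tendsto s atTop (𝓝 b) ∧ Tendsto (fun k => u (s k)) atTop (𝓝 x)}

theorem leftLimitSet_eq_clusterSet [FirstCountableTopology α] [FirstCountableTopology X]
    (hab : a < b) : leftLimitSet u a b = clusterSet (𝓝[<] b) u := by
  ext x
  constructor
  · rintro ⟨s, hs, -, hsb, hux⟩
    exact MapClusterPt.of_comp
      (tendsto_nhdsWithin_iff.2 ⟨hsb, Eventually.of_forall fun k => (hs k).2⟩) hux.mapClusterPt
  · intro hx
    have : NeBot (𝓝[<] b ⊓ comap u (𝓝 x)) := by
      rw [neBot_inf_comap_iff_map, inf_comm]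
      exact hx
    obtain ⟨s, hs, hmono, hlim⟩ := exists_strictMono_tendsto_of_le_nhdsLT
      (l := 𝓝[<] b ⊓ comap u (𝓝 x)) inf_le_left (mem_inf_of_left (Ico_mem_nhdsLT hab))
    rw [tendsto_inf, tendsto_comap_iff] at hlim
    exact ⟨s, hs, hmono.monotone, hlim.1.mono_right nhdsWithin_le_nhds, hlim.2⟩

end LinearOrder

theorem isPreconnected_clusterSet_nhdsLT [ConditionallyCompleteLinearOrder α]
    [TopologicalSpace α] [OrderTopology α] [DenselyOrdered α] [T2Space X] {B : Set X} (hab : a < b)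
    (hu : ContinuousOn u (Ico a b)) (hB : IsCompact B) (huB : ∀ᶠ t in 𝓝[<] b, u t ∈ B) :
    IsPreconnected (clusterSet (𝓝[<] b) u) := by
  refine isPreconnected_clusterSet hB huB fun s hs => ?_
  obtain ⟨c, hc, hcs⟩ :=
    (mem_nhdsLT_iff_exists_Ioo_subset' hab).1 (inter_mem hs (Ico_mem_nhdsLT hab))
  exact ⟨Ioo c b, Ioo_mem_nhdsLT hc, fun t ht => (hcs ht).1,
    isPreconnected_Ioo.image u (hu.mono fun t ht => (hcs ht).2)⟩

end LeftLimitSet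

theorem continuousOn_piecewise_Iio {α X : Type*} [LinearOrder α] [TopologicalSpace α]
    [OrderTopology α] [TopologicalSpace X] {u v : α → X} {a b c : α}
    (hu : ContinuousOn u (Ico a b)) (hv : ContinuousOn v (Ico b c))
    (huv : Tendsto u (𝓝[<] b) (𝓝 (v b))) :
    ContinuousOn ((Iio b).piecewise u v) (Ico a c) := by
  have hvb : (Iio b).piecewise u v b = v b := piecewise_eq_of_notMem _ _ _ (lt_irrefl b)
  refine ContinuousOn.piecewise' (fun t ht => ?_) (fun t ht => ?_)
    (hu.mono fun t ht => ⟨ht.1.1, ht.2⟩) (hv.mono fun t ht => ⟨not_lt.1 ht.2, ht.1.2⟩)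
  · obtain rfl : t = b := frontier_lt_subset_eq continuous_id continuous_const ht.2
    rw [hvb]
    exact huv.mono_left (nhdsWithin_mono _ inter_subset_right)
  · obtain rfl : t = b := frontier_lt_subset_eq continuous_id continuous_const ht.2
    rw [hvb]
    exact (hv t ⟨le_rfl, ht.1.2⟩).mono fun s hs => ⟨not_lt.1 hs.2, hs.1.2⟩

section PartialDerivative

variable {𝕜 P E F : Type*} [NontriviallyNormedField 𝕜] [NormedAddCommGroup P] [NormedSpace 𝕜 P]
  [NormedAddCommGroup E] [NormedSpace 𝕜 E] [NormedAddCommGroup F] [NormedSpace 𝕜 F]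

theorem hasFDerivAt_curry_right {G : P → E → F} {p : P} {x : E}
    (hG : DifferentiableAt 𝕜 (Function.uncurry G) (p, x)) :
    HasFDerivAt (G p) (fderiv 𝕜 (Function.uncurry G) (p, x) ∘L .inr 𝕜 P E) x :=
  hG.hasFDerivAt.comp x (hasFDerivAt_prodMk_right p x)

theorem contDiffOn_fderiv_curry_right {G : P → E → F} {S : Set P} {m n : WithTop ℕ∞}
    (hG : ContDiffOn 𝕜 n (Function.uncurry G) (S ×ˢ univ)) (hmn : m + 1 ≤ n) :
    ContDiffOn 𝕜 m (fun q : P × E => fderiv 𝕜 (G q.1) q.2) (S ×ˢ univ) := by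
  intro q hq
  simp only [← fderivWithin_univ]
  have hG' : ContDiffWithinAt 𝕜 n (Function.uncurry fun r : P × E => G r.1)
      ((S ×ˢ univ) ×ˢ univ) (q, q.2) :=
    ContDiffWithinAt.comp (t := S ×ˢ univ) (q, q.2) (hG q hq)
      (contDiff_fst.fst.prodMk contDiff_snd).contDiffWithinAt fun _ hr => ⟨hr.1.1, mem_univ _⟩
  exact hG'.fderivWithin contDiffWithinAt_snd uniqueDiffOn_univ hmn hq (subset_univ _)

theorem not_accPt_setOf_eq_of_isInvertible {g : E → F} {g' : E →L[𝕜] F} {x : E} (y : F)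
    (hg : HasFDerivAt g g' x) (hg' : g'.IsInvertible) : ¬ AccPt x (𝓟 {z | g z = y}) := by
  obtain ⟨e, rfl⟩ := hg'
  rw [accPt_iff_frequently_nhdsNE, not_frequently]
  exact hg.eventually_ne ⟨_, e.antilipschitz⟩

theorem isInvertible_iff_det_ne_zero [CompleteSpace 𝕜] [FiniteDimensional 𝕜 E] {A : E →L[𝕜] E} :
    A.IsInvertible ↔ LinearMap.det (A : E →ₗ[𝕜] E) ≠ 0 := by
  refine ⟨?_, fun hA => ⟨A.toContinuousLinearEquivOfDetNeZero hA, ?_⟩⟩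
  · rintro ⟨e, rfl⟩
    exact e.toLinearEquiv.isUnit_det'.ne_zero
  · ext
    rfl

end PartialDerivative

theorem contDiffOn_gradient {P E : Type*} [NormedAddCommGroup P] [NormedSpace ℝ P]
    [NormedAddCommGroup E] [InnerProductSpace ℝ E] [CompleteSpace E] {f : P → E → ℝ}
    {S : Set P} {m n : WithTop ℕ∞}
    (hf : ContDiffOn ℝ n (Function.uncurry f) (S ×ˢ univ)) (hmn : m + 1 ≤ n) :
    ContDiffOn ℝ m (Function.uncurry fun p => gradient (f p)) (S ×ˢ univ) :=
  (InnerProductSpace.toDual ℝ E).symm.contDiff.comp_contDiffOn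
    (contDiffOn_fderiv_curry_right hf hmn)

section Continuation

variable {𝕜 P E F : Type*} [RCLike 𝕜] [NormedAddCommGroup P] [NormedSpace 𝕜 P] [CompleteSpace P]
  [NormedAddCommGroup E] [NormedSpace 𝕜 E] [CompleteSpace E]
  [NormedAddCommGroup F] [NormedSpace 𝕜 F] [CompleteSpace F]

theorem exists_implicit_branch {G : P → E → F} {p : P} {x : E}
    (hG : ContDiffAt 𝕜 1 (Function.uncurry G) (p, x)) (hinv : (fderiv 𝕜 (G p) x).IsInvertible) :
    ∃ g : P → E, g p = x ∧ ∀ᶠ q in 𝓝 p,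
      ContinuousAt g q ∧ G q (g q) = G p x ∧ (fderiv 𝕜 (G q) (g q)).IsInvertible := by
  have hinv' : (fderiv 𝕜 (Function.uncurry G) (p, x) ∘L .inr 𝕜 P E).IsInvertible := by
    rwa [← (hasFDerivAt_curry_right (hG.differentiableAt one_ne_zero)).fderiv]
  set g := hG.implicitFunction one_ne_zero hinv'
  have hgp : g p = x := hG.implicitFunction_apply_self one_ne_zero hinv'
  have hg : ContDiffAt 𝕜 1 g p := hG.contDiffAt_implicitFunction one_ne_zero hinv'
  have hderiv : ContinuousAt (fun q => fderiv 𝕜 (G q) (g q)) p :=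
    (ContDiffAt.fderiv (m := 0) (by rwa [hgp]) (hg.of_le zero_le_one) le_rfl).continuousAt
  have hinvertible : ∀ᶠ q in 𝓝 p, (fderiv 𝕜 (G q) (g q)).IsInvertible :=
    hderiv.eventually (ContinuousLinearEquiv.isOpen.mem_nhds
      (show (fderiv 𝕜 (G p) (g p)).IsInvertible by rwa [hgp]))
  refine ⟨g, hgp, ?_⟩
  filter_upwards [hg.eventually (by simp), hG.eventually_apply_implicitFunction one_ne_zero hinv',
    hinvertible] with q hcont hlevel hq
  exact ⟨hcont.continuousAt, hlevel, hq⟩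

end Continuation

theorem exists_continuation_of_isInvertible {E F : Type*} [NormedAddCommGroup E] [NormedSpace ℝ E]
    [CompleteSpace E] [NormedAddCommGroup F] [NormedSpace ℝ F] [CompleteSpace F]
    {G : ℝ → E → F} {u : ℝ → E} {a b T : ℝ} {x : E} (hbT : b < T)
    (hu : ContinuousOn u (Ico a b)) (hux : Tendsto u (𝓝[<] b) (𝓝 x))
    (hG : ContDiffAt ℝ 1 (Function.uncurry G) (b, x))
    (hinv : (fderiv ℝ (G b) x).IsInvertible) :
    ∃ η > 0, b + η ≤ T ∧ ∃ v : ℝ → E, ContinuousOn v (Ico a (b + η)) ∧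
      EqOn v u (Iio b) ∧
      ∀ t ∈ Ico b (b + η), G t (v t) = G b x ∧ (fderiv ℝ (G t) (v t)).IsInvertible := by
  obtain ⟨g, hgx, hg⟩ := exists_implicit_branch hG hinv
  obtain ⟨c, ⟨hbc, hcT⟩, hc⟩ :=
    (mem_nhdsGE_iff_exists_mem_Ioc_Ico_subset hbT).1 (mem_nhdsWithin_of_mem_nhds hg)
  obtain ⟨η, rfl⟩ : ∃ η, c = b + η := ⟨c - b, (add_sub_cancel b c).symm⟩
  refine ⟨η, (lt_add_iff_pos_right b).1 hbc, hcT, (Iio b).piecewise u g,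
    continuousOn_piecewise_Iio hu (fun t ht => (hc ht).1.continuousWithinAt) (hgx ▸ hux),
    piecewise_eqOn _ _ _, fun t ht => ?_⟩
  rw [piecewise_eq_of_notMem _ _ _ (notMem_Iio.2 ht.1)]
  exact (hc ht).2

theorem norm_le_sqrt_of_coercive {E : Type*} [NormedAddCommGroup E] [InnerProductSpace ℝ E]
    {v : E → E} {a₀ c₀ : ℝ} (hc₀ : 0 < c₀) (hv : ∀ x, ⟪v x, x⟫ ≥ c₀ * ‖x‖ ^ 2 - a₀) {x : E}
    (hx : v x = 0) : ‖x‖ ≤ √(a₀ / c₀) := by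
  have h : c₀ * ‖x‖ ^ 2 ≤ a₀ := by simpa [hx] using hv x
  exact Real.le_sqrt_of_sq_le ((le_div_iff₀' hc₀).2 h)

theorem limit_set_of_branch_general {E F : Type*} [NormedAddCommGroup E] [NormedSpace ℝ E]
    [CompleteSpace E] [NormedAddCommGroup F] [NormedSpace ℝ F] [CompleteSpace F]
    {a b T : ℝ} (hab : a < b) (hbT : b ≤ T) {G : ℝ → E → F}
    (hG : ContDiffOn ℝ 1 (Function.uncurry G) (Icc a T ×ˢ univ)) {u : ℝ → E}
    (hu : ContinuousOn u (Ico a b)) (hzero : ∀ t ∈ Ico a b, G t (u t) = 0)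
    {B : Set E} (hB : IsCompact B) (huB : MapsTo u (Ico a b) B) :
    (leftLimitSet u a b).Nonempty ∧ IsCompact (leftLimitSet u a b) ∧
      IsConnected (leftLimitSet u a b) ∧ (∀ x ∈ leftLimitSet u a b, G b x = 0) ∧
      (b < T → (∀ t ∈ Ico a b, (fderiv ℝ (G t) (u t)).IsInvertible) →
        (¬ ∃ η > 0, b + η ≤ T ∧ ∃ v : ℝ → E, ContinuousOn v (Ico a (b + η)) ∧
          (∀ t ∈ Ico a b, v t = u t) ∧
          ∀ t ∈ Ico a (b + η), G t (v t) = 0 ∧ (fderiv ℝ (G t) (v t)).IsInvertible) →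
        ∀ x ∈ leftLimitSet u a b, ¬ (fderiv ℝ (G b) x).IsInvertible) := by
  have hIco : Ico a b ∈ 𝓝[<] b := Ico_mem_nhdsLT hab
  have huB' : ∀ᶠ t in 𝓝[<] b, u t ∈ B := mem_of_superset hIco huB
  have hIcc : 𝓝[<] b ≤ 𝓝[Icc a T] b := nhdsWithin_le_of_mem <|
    mem_of_superset hIco (Ico_subset_Icc_self.trans (Icc_subset_Icc_right hbT))
  rw [leftLimitSet_eq_clusterSet hab]
  have hne := nonempty_clusterSet hB huB'
  have hpre := isPreconnected_clusterSet_nhdsLT hab hu hB huB'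
  have hcrit : ∀ x ∈ clusterSet (𝓝[<] b) u, G b x = 0 := fun x hx =>
    apply_eq_of_mapClusterPt (hG.continuousOn (b, x) ⟨⟨hab.le, hbT⟩, mem_univ x⟩) hIcc
      (mem_of_superset hIco hzero) hx
  refine ⟨hne, isCompact_clusterSet hB huB', ⟨hne, hpre⟩, hcrit,
    fun hbT' hreg hmax x hx hinv => hmax ?_⟩
  have hGx : ContDiffAt ℝ 1 (Function.uncurry G) (b, x) :=
    hG.contDiffAt (prod_mem_nhds (Icc_mem_nhds hab hbT') univ_mem)
  have hux : Tendsto u (𝓝[<] b) (𝓝 x) :=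
    tendsto_nhds_of_not_accPt_clusterSet hB huB' hpre hx fun hacc =>
      not_accPt_setOf_eq_of_isInvertible 0
        (hasFDerivAt_curry_right (hGx.differentiableAt one_ne_zero)).differentiableAt.hasFDerivAt
        hinv (hacc.mono (principal_mono.2 hcrit))
  obtain ⟨η, hη, hηT, v, hv, hvu, hvG⟩ := exists_continuation_of_isInvertible hbT' hu hux hGx hinv
  refine ⟨η, hη, hηT, v, hv, fun t ht => hvu ht.2, fun t ht => ?_⟩
  rcases lt_or_ge t b with htb | hbt
  · rw [hvu htb]
    exact ⟨hzero t ⟨ht.1, htb⟩, hreg t ⟨ht.1, htb⟩⟩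
  · rw [← hcrit x hx]
    exact hvG t ⟨hbt, ht.2⟩

/-- the set `K` of limits of `u(s_k)` along increasing sequences `s_k ↗ t̂`
is nonempty, compact and connected, and consists of critical points of `f(t̂,·)`;
if moreover `t̂ < T`, the branch is nondegenerate and cannot be continued beyond `t̂`,
then the Hessian is degenerate at every point of `K`. -/
theorem limit_set_of_branch
    {n : ℕ} (hn : 1 ≤ n) {T : ℝ} (hT : 0 < T)
    (f : ℝ → EuclideanSpace ℝ (Fin n) → ℝ)
    (hf : ContDiffOn ℝ 3 (Function.uncurry f)
      (Set.Icc 0 T ×ˢ (Set.univ : Set (EuclideanSpace ℝ (Fin n)))))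
    {a₀ c₀ : ℝ} (ha₀ : 0 ≤ a₀) (hc₀ : 0 < c₀)
    (hA1 : ∀ t ∈ Set.Icc (0:ℝ) T, ∀ x : EuclideanSpace ℝ (Fin n),
      ⟪gradient (f t) x, x⟫ ≥ c₀ * ‖x‖ ^ 2 - a₀)
    (tbar that : ℝ) (h0 : 0 ≤ tbar) (hlt : tbar < that) (hle : that ≤ T)
    (u : ℝ → EuclideanSpace ℝ (Fin n))
    (hu : ContinuousOn u (Set.Ico tbar that))
    (hcrit : ∀ t ∈ Set.Ico tbar that, gradient (f t) (u t) = 0) :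
    let K : Set (EuclideanSpace ℝ (Fin n)) :=
      {x | ∃ s : ℕ → ℝ, (∀ k, s k ∈ Set.Ico tbar that) ∧ Monotone s ∧
        Tendsto s atTop (nhds that) ∧ Tendsto (fun k => u (s k)) atTop (nhds x)}
    K.Nonempty ∧ IsCompact K ∧ IsConnected K ∧
    (∀ x ∈ K, gradient (f that) x = 0) ∧
    (that < T →
      (∀ t ∈ Set.Ico tbar that,
        LinearMap.det ((fderiv ℝ (gradient (f t)) (u t) :
          EuclideanSpace ℝ (Fin n) →L[ℝ] EuclideanSpace ℝ (Fin n)) :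
          EuclideanSpace ℝ (Fin n) →ₗ[ℝ] EuclideanSpace ℝ (Fin n)) ≠ 0) →
      (¬ ∃ η > (0:ℝ), that + η ≤ T ∧ ∃ utilde : ℝ → EuclideanSpace ℝ (Fin n),
        ContinuousOn utilde (Set.Ico tbar (that + η)) ∧
        (∀ t ∈ Set.Ico tbar that, utilde t = u t) ∧
        (∀ t ∈ Set.Ico tbar (that + η), gradient (f t) (utilde t) = 0 ∧
          LinearMap.det ((fderiv ℝ (gradient (f t)) (utilde t) :
            EuclideanSpace ℝ (Fin n) →L[ℝ] EuclideanSpace ℝ (Fin n)) :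
            EuclideanSpace ℝ (Fin n) →ₗ[ℝ] EuclideanSpace ℝ (Fin n)) ≠ 0)) →
      ∀ x ∈ K,
        LinearMap.det ((fderiv ℝ (gradient (f that)) x :
          EuclideanSpace ℝ (Fin n) →L[ℝ] EuclideanSpace ℝ (Fin n)) :
          EuclideanSpace ℝ (Fin n) →ₗ[ℝ] EuclideanSpace ℝ (Fin n)) = 0) := by
  have hgrad : ContDiffOn ℝ 1 (Function.uncurry fun t => gradient (f t)) (Icc tbar T ×ˢ univ) :=
    (contDiffOn_gradient hf (by norm_num)).mono (prod_mono_left (Icc_subset_Icc_left h0))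
  have hball : MapsTo u (Ico tbar that) (Metric.closedBall 0 √(a₀ / c₀)) := fun t ht =>
    mem_closedBall_zero_iff.2 <|
      norm_le_sqrt_of_coercive hc₀ (hA1 t ⟨h0.trans ht.1, ht.2.le.trans hle⟩) (hcrit t ht)
  simpa only [isInvertible_iff_det_ne_zero, not_not] using!
    limit_set_of_branch_general hlt hle hgrad hu hcrit (isCompact_closedBall 0 _) hball
end

section
/- Under Assumption 1, let 0 < t₁ ≤ T and let u : [0,t₁) → ℝⁿ be of class C¹ with ∇ₓf(t,u(t)) = 0 and ∇²ₓf(t,u(t)) positive definite for every t ∈ [0,t₁). For each ε > 0 let u_ε : [0,T] → ℝⁿ solve ε u̇_ε(t) = −∇ₓf(t,u_ε(t)), and assume u_ε(0) → u(0) as ε → 0. Then u_ε → u uniformly on every compact subset of [0,t₁) as ε → 0. -/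
open Set Filter Topology
open scoped RealInnerProductSpace

/-!
Consider `ε v̇ = -g t v` with `g = ∇ₓf`, or any `C¹` field vanishing along the branch `u`. By
continuity the spatial derivative of `g` stays positive definite in a uniform tube around a compact
piece of the branch, so the mean value theorem gives `⟪g t (u t + z), z⟫ > 0` for all small `z ≠ 0`.
On the sphere `‖z‖ = η` this quantity is at least some `m > 0`, while the branch moves with speed at
most `M`. Once `ε M η < m`, the drift towards the branch beats its motion on the boundary of the
tube of radius `η`, so a solution starting in that tube can never leave it.
-/

section SpatialDerivatives

variable {𝕜 P E F : Type*} [NontriviallyNormedField 𝕜] [NormedAddCommGroup P] [NormedSpace 𝕜 P]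
  [NormedAddCommGroup E] [NormedSpace 𝕜 E] [NormedAddCommGroup F] [NormedSpace 𝕜 F]
  {s : Set P} {g : P → E → F}

lemma differentiable_of_differentiableOn_uncurry
    (hg : DifferentiableOn 𝕜 (Function.uncurry g) (s ×ˢ univ)) {p : P} (hp : p ∈ s) :
    Differentiable 𝕜 (g p) :=
  differentiableOn_univ.1 <| hg.comp (f := fun x ↦ (p, x))
    ((differentiableOn_const p).prodMk differentiableOn_id) (fun _ _ ↦ ⟨hp, trivial⟩)

lemma contDiffOn_uncurry_fderiv {m : WithTop ℕ∞}
    (hg : ContDiffOn 𝕜 (m + 1) (Function.uncurry g) (s ×ˢ univ)) :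
    ContDiffOn 𝕜 m (Function.uncurry fun p ↦ fderiv 𝕜 (g p)) (s ×ˢ univ) := by
  intro q hq
  have hg' : ContDiffWithinAt 𝕜 (m + 1) (Function.uncurry fun (r : P × E) y ↦ g r.1 y)
      ((s ×ˢ univ) ×ˢ univ) (q, q.2) :=
    (hg q hq).comp (q, q.2) (f := fun r : (P × E) × E ↦ (r.1.1, r.2))
      (contDiff_fst.fst.prodMk contDiff_snd).contDiffWithinAt (fun _ hr ↦ ⟨hr.1.1, trivial⟩)
  have hfderiv := hg'.fderivWithin contDiffWithinAt_snd uniqueDiffOn_univ le_rfl hq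
    (fun _ _ ↦ trivial)
  simp only [fderivWithin_univ] at hfderiv
  exact hfderiv

end SpatialDerivatives

lemma contDiffOn_uncurry_gradient {P E : Type*} [NormedAddCommGroup P] [NormedSpace ℝ P]
    [NormedAddCommGroup E] [InnerProductSpace ℝ E] [CompleteSpace E] {s : Set P} {f : P → E → ℝ}
    {m : WithTop ℕ∞} (hf : ContDiffOn ℝ (m + 1) (Function.uncurry f) (s ×ˢ univ)) :
    ContDiffOn ℝ m (Function.uncurry fun p ↦ gradient (f p)) (s ×ˢ univ) :=
  (InnerProductSpace.toDual ℝ E).symm.contDiff.comp_contDiffOn (contDiffOn_uncurry_fderiv hf)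


lemma eventually_forall_add_mem_of_isCompact {X F Z : Type*} [TopologicalSpace X]
    [TopologicalSpace F] [AddZeroClass F] [ContinuousAdd F] [TopologicalSpace Z]
    {K : Set X} (hK : IsCompact K) {u : X → F} (hu : ContinuousOn u K) {A : X × F → Z}
    (hA : ContinuousOn A (K ×ˢ univ)) {U : Set Z} (hU : IsOpen U)
    (hmem : ∀ t ∈ K, A (t, u t) ∈ U) :
    ∀ᶠ z in 𝓝 0, ∀ t ∈ K, A (t, u t + z) ∈ U := by
  have hcont : ContinuousOn (fun p : F × X ↦ A (p.2, u p.2 + p.1)) (univ ×ˢ K) :=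
    hA.comp (continuousOn_snd.prodMk ((hu.comp continuousOn_snd fun _ hp ↦ hp.2).add
      continuousOn_fst)) (fun _ hp ↦ ⟨hp.2, trivial⟩)
  have hloc : ∀ t ∈ K, ∀ᶠ p : F × X in 𝓝 (0, t), p.2 ∈ K → A (p.2, u p.2 + p.1) ∈ U := by
    intro t ht
    have hnear := (hcont (0, t) ⟨trivial, ht⟩).eventually
      (hU.mem_nhds (by simpa only [add_zero] using hmem t ht))
    filter_upwards [eventually_nhdsWithin_iff.1 hnear] with p hp hpK using hp ⟨trivial, hpK⟩
  filter_upwards [hK.eventually_forall_of_forall_eventually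
    (P := fun z t ↦ t ∈ K → A (t, u t + z) ∈ U) hloc] with z hz t ht using hz t ht ht

section Monotonicity

variable {E : Type*} [NormedAddCommGroup E] [InnerProductSpace ℝ E]

lemma isOpen_setOf_inner_apply_self_pos [FiniteDimensional ℝ E] :
    IsOpen {A : E →L[ℝ] E | ∀ y ≠ 0, 0 < ⟪A y, y⟫} := by
  rw [isOpen_iff_eventually]
  intro A hA
  have hloc : ∀ y ∈ Metric.sphere (0 : E) 1,
      ∀ᶠ p : (E →L[ℝ] E) × E in 𝓝 (A, y), 0 < ⟪p.1 p.2, p.2⟫ := fun y hy ↦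
    (isOpen_lt continuous_const (by fun_prop)).mem_nhds
      (hA y (ne_zero_of_mem_unit_sphere ⟨y, hy⟩))
  filter_upwards [(isCompact_sphere 0 1).eventually_forall_of_forall_eventually
    (P := fun B y ↦ 0 < ⟪B y, y⟫) hloc] with B hB y hy
  have hnormalized := hB (‖y‖⁻¹ • y) (by simp [norm_smul, hy])
  rw [map_smul, real_inner_smul_left, real_inner_smul_right] at hnormalized
  have hinv : 0 ≤ ‖y‖⁻¹ := by positivity
  exact pos_of_mul_pos_right (pos_of_mul_pos_right hnormalized hinv) hinv

lemma inner_sub_pos_of_hasFDerivWithinAt {s : Set E} (hs : Convex ℝ s) {g : E → E}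
    {g' : E → E →L[ℝ] E} (hg : ∀ x ∈ s, HasFDerivWithinAt g (g' x) s x)
    (hpos : ∀ x ∈ s, ∀ y ≠ 0, 0 < ⟪g' x y, y⟫) {x y : E} (hx : x ∈ s) (hy : y ∈ s)
    (hxy : x ≠ y) : 0 < ⟪g y - g x, y - x⟫ := by
  obtain ⟨c, hc, hmean⟩ := domain_mvt
    (fun p hp ↦ (innerSL ℝ (y - x)).hasFDerivAt.comp_hasFDerivWithinAt p (hg p hp)) hs hx hy
  have hinner : ⟪g y - g x, y - x⟫ = ⟪g' c (y - x), y - x⟫ := by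
    rw [real_inner_comm (y - x), real_inner_comm (y - x), inner_sub_right]
    exact hmean
  exact hinner ▸ hpos c (hs.segment_subset hx hy hc) _ (sub_ne_zero.2 hxy.symm)

lemma eventually_forall_inner_pos_of_fderiv_pos [FiniteDimensional ℝ E] {X : Type*}
    [TopologicalSpace X] {K : Set X} (hK : IsCompact K) {g : X → E → E} {g' : X → E → E →L[ℝ] E}
    (hg : ∀ t ∈ K, ∀ x, HasFDerivAt (g t) (g' t x) x)
    (hg' : ContinuousOn (Function.uncurry g') (K ×ˢ univ)) {u : X → E} (hu : ContinuousOn u K)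
    (hzero : ∀ t ∈ K, g t (u t) = 0) (hpos : ∀ t ∈ K, ∀ y ≠ 0, 0 < ⟪g' t (u t) y, y⟫) :
    ∀ᶠ z in 𝓝[≠] 0, ∀ t ∈ K, 0 < ⟪g t (u t + z), z⟫ := by
  obtain ⟨δ, hδ, htube⟩ := Metric.eventually_nhds_iff_ball.1
    (eventually_forall_add_mem_of_isCompact hK hu hg' isOpen_setOf_inner_apply_self_pos hpos)
  filter_upwards [nhdsWithin_le_nhds (Metric.ball_mem_nhds 0 hδ), self_mem_nhdsWithin]
    with z hz hz0 t ht
  have hposBall : ∀ x ∈ Metric.ball (u t) δ, ∀ y ≠ 0, 0 < ⟪g' t x y, y⟫ := fun x hx ↦ by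
    simpa using htube (x - u t) (by simpa [dist_eq_norm] using hx) t ht
  simpa [hzero t ht] using inner_sub_pos_of_hasFDerivWithinAt (convex_ball (u t) δ)
    (fun x _ ↦ (hg t ht x).hasFDerivWithinAt) hposBall (Metric.mem_ball_self hδ)
    (y := u t + z) (by simpa using hz) (by simpa [eq_comm] using hz0)

lemma exists_pos_forall_le_inner_of_norm_eq [FiniteDimensional ℝ E] {X : Type*}
    [TopologicalSpace X] {K : Set X} (hK : IsCompact K) {g : X → E → E}
    (hg : ContinuousOn (Function.uncurry g) (K ×ˢ univ)) {u : X → E} (hu : ContinuousOn u K)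
    {η : ℝ} (hpos : ∀ t ∈ K, ∀ z, ‖z‖ = η → 0 < ⟪g t (u t + z), z⟫) :
    ∃ m > 0, ∀ t ∈ K, ∀ z, ‖z‖ = η → m ≤ ⟪g t (u t + z), z⟫ := by
  have hcont : ContinuousOn (fun p : X × E ↦ ⟪g p.1 (u p.1 + p.2), p.2⟫)
      (K ×ˢ Metric.sphere 0 η) := by
    have hpoint : ContinuousOn (fun p : X × E ↦ u p.1 + p.2) (K ×ˢ Metric.sphere 0 η) :=
      (hu.comp continuousOn_fst fun _ hp ↦ hp.1).add continuousOn_snd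
    have hfield : ContinuousOn (fun p : X × E ↦ g p.1 (u p.1 + p.2)) (K ×ˢ Metric.sphere 0 η) :=
      hg.comp (continuousOn_fst.prodMk hpoint) (fun _ hp ↦ ⟨hp.1, trivial⟩)
    exact hfield.inner (𝕜 := ℝ) continuousOn_snd
  obtain ⟨m, hm, hle⟩ := (hK.prod (isCompact_sphere 0 η)).exists_forall_le' hcont
    fun p hp ↦ hpos p.1 hp.1 p.2 (mem_sphere_zero_iff_norm.1 hp.2)
  exact ⟨m, hm, fun t ht z hz ↦ hle (t, z) ⟨ht, mem_sphere_zero_iff_norm.2 hz⟩⟩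

end Monotonicity

section Tracking

variable {E : Type*} [NormedAddCommGroup E] [InnerProductSpace ℝ E] {a b : ℝ}

lemma norm_le_of_inner_deriv_neg_on_sphere {w w' : ℝ → E} {η : ℝ}
    (hw : ∀ t ∈ Icc a b, HasDerivWithinAt w (w' t) (Icc a b) t) (hinit : ‖w a‖ ≤ η)
    (hin : ∀ t ∈ Ico a b, ‖w t‖ = η → ⟪w t, w' t⟫ < 0) :
    ∀ t ∈ Icc a b, ‖w t‖ ≤ η := by
  intro t ht
  have hη : 0 ≤ η := (norm_nonneg _).trans hinit
  have hsq : ‖w t‖ ^ 2 ≤ η ^ 2 := by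
    refine image_le_of_deriv_right_lt_deriv_boundary (f := fun s ↦ ‖w s‖ ^ 2)
      (f' := fun s ↦ 2 * ⟪w s, w' s⟫) (B := fun _ ↦ η ^ 2)
      (fun s hs ↦ (hw s hs).norm_sq.continuousWithinAt) (fun s hs ↦ ?_)
      (pow_le_pow_left₀ (norm_nonneg _) hinit 2) (fun _ ↦ hasDerivAt_const _ _)
      (fun s hs hsphere ↦ ?_) ht
    · exact (hw s (Ico_subset_Icc_self hs)).norm_sq.mono_of_mem_nhdsWithin
        (Icc_mem_nhdsGE_of_mem hs)
    · linarith [hin s hs ((sq_eq_sq₀ (norm_nonneg _) hη).1 hsphere)]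
  exact (sq_le_sq₀ (norm_nonneg _) hη).1 hsq

variable {g : ℝ → E → E} {u u' : ℝ → E} {M : ℝ}

lemma norm_sub_le_of_le_inner_on_sphere {v : ℝ → E} {ε η m : ℝ} (hε : 0 < ε)
    (hu : ∀ t ∈ Icc a b, HasDerivWithinAt u (u' t) (Icc a b) t)
    (hu' : ∀ t ∈ Icc a b, ‖u' t‖ ≤ M)
    (hv : ∀ t ∈ Icc a b, HasDerivWithinAt v (-(ε⁻¹ • g t (v t))) (Icc a b) t)
    (hm : ∀ t ∈ Icc a b, ∀ z, ‖z‖ = η → m ≤ ⟪g t (u t + z), z⟫)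
    (hsmall : ε * (M * η) < m) (hinit : ‖v a - u a‖ ≤ η) :
    ∀ t ∈ Icc a b, ‖v t - u t‖ ≤ η := by
  refine norm_le_of_inner_deriv_neg_on_sphere (fun t ht ↦ (hv t ht).sub (hu t ht)) hinit
    fun t ht hη ↦ ?_
  have ht' : t ∈ Icc a b := Ico_subset_Icc_self ht
  have hdrift : m ≤ ⟪v t - u t, g t (v t)⟫ := by
    simpa [real_inner_comm] using hm t ht' (v t - u t) hη
  have hspeed : -⟪v t - u t, u' t⟫ ≤ M * η := calc
    -⟪v t - u t, u' t⟫ ≤ ‖v t - u t‖ * ‖u' t‖ :=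
      (neg_le_abs _).trans (abs_real_inner_le_norm _ _)
    _ ≤ η * M := hη ▸ mul_le_mul_of_nonneg_left (hu' t ht') (norm_nonneg _)
    _ = M * η := mul_comm _ _
  calc ⟪v t - u t, -(ε⁻¹ • g t (v t)) - u' t⟫
      = -(ε⁻¹ * ⟪v t - u t, g t (v t)⟫) + -⟪v t - u t, u' t⟫ := by
        rw [inner_sub_right, inner_neg_right, real_inner_smul_right, sub_eq_add_neg]
    _ ≤ -(ε⁻¹ * m) + M * η := by gcongr
    _ < 0 := by
        rw [neg_add_lt_iff_lt_add, add_zero, lt_inv_mul_iff₀ hε]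
        exact hsmall

lemma tendstoUniformlyOn_Icc_of_inner_pos [FiniteDimensional ℝ E] {v : ℝ → ℝ → E}
    (hg : ContinuousOn (Function.uncurry g) (Icc a b ×ˢ univ))
    (hu : ∀ t ∈ Icc a b, HasDerivWithinAt u (u' t) (Icc a b) t)
    (hu' : ∀ t ∈ Icc a b, ‖u' t‖ ≤ M)
    (hpos : ∀ᶠ z in 𝓝[≠] 0, ∀ t ∈ Icc a b, 0 < ⟪g t (u t + z), z⟫)
    (hv : ∀ ε > 0, ∀ t ∈ Icc a b,
      HasDerivWithinAt (v ε) (-(ε⁻¹ • g t (v ε t))) (Icc a b) t)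
    (hinit : Tendsto (fun ε ↦ v ε a) (𝓝[>] 0) (𝓝 (u a))) :
    TendstoUniformlyOn v u (𝓝[>] 0) (Icc a b) := by
  rw [Metric.tendstoUniformlyOn_iff]
  intro r hr
  obtain ⟨δ, hδ, hball⟩ := Metric.eventually_nhds_iff_ball.1 (eventually_nhdsWithin_iff.1 hpos)
  obtain ⟨η, hη, hηlt⟩ := exists_between (lt_min hr hδ)
  obtain ⟨hηr, hηδ⟩ := lt_min_iff.1 hηlt
  obtain ⟨m, hm, hsphere⟩ := exists_pos_forall_le_inner_of_norm_eq isCompact_Icc hg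
    (fun t ht ↦ (hu t ht).continuousWithinAt) (η := η) fun t ht z hz ↦
      hball z (by simpa [hz] using hηδ) (norm_pos_iff.1 (hz ▸ hη)) t ht
  have hsmall : ∀ᶠ ε : ℝ in 𝓝[>] 0, ε * (M * η) < m :=
    nhdsWithin_le_nhds ((isOpen_lt (by fun_prop) continuous_const).mem_nhds (by simpa using hm))
  filter_upwards [hsmall, self_mem_nhdsWithin, Metric.tendsto_nhds.1 hinit η hη]
    with ε hεm hε hεinit t ht
  rw [dist_comm, dist_eq_norm]
  exact (norm_sub_le_of_le_inner_on_sphere hε hu hu' (hv ε hε) hsphere hεm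
    (by simpa [dist_eq_norm] using hεinit.le) t ht).trans_lt hηr

end Tracking

lemma exists_mem_Ico_subset_Icc_of_isCompact {α : Type*} [LinearOrder α] [TopologicalSpace α]
    [ClosedIciTopology α] {K : Set α} (hK : IsCompact K) (hne : K.Nonempty) {a c : α}
    (hsub : K ⊆ Ico a c) : ∃ b ∈ Ico a c, K ⊆ Icc a b := by
  obtain ⟨b, hbK, hb⟩ := hK.exists_isGreatest hne
  exact ⟨b, hsub hbK, fun t ht ↦ ⟨(hsub ht).1, hb ht⟩⟩

theorem convergence_on_compacts_before_first_critical_time_general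
    {E : Type*} [NormedAddCommGroup E] [InnerProductSpace ℝ E] [FiniteDimensional ℝ E]
    {t₀ t₁ : ℝ} {g : ℝ → E → E}
    (hg : ContDiffOn ℝ 1 (Function.uncurry g) (Ico t₀ t₁ ×ˢ univ))
    {u : ℝ → E} (hu : ContDiffOn ℝ 1 u (Ico t₀ t₁))
    (hzero : ∀ t ∈ Ico t₀ t₁, g t (u t) = 0)
    (hpos : ∀ t ∈ Ico t₀ t₁, ∀ y ≠ 0, 0 < ⟪fderiv ℝ (g t) (u t) y, y⟫)
    {v : ℝ → ℝ → E}
    (hv : ∀ ε > 0, ∀ t ∈ Ico t₀ t₁,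
      HasDerivWithinAt (v ε) (-(ε⁻¹ • g t (v ε t))) (Ico t₀ t₁) t)
    (hinit : Tendsto (fun ε ↦ v ε t₀) (𝓝[>] 0) (𝓝 (u t₀)))
    {K : Set ℝ} (hK : K ⊆ Ico t₀ t₁) (hKc : IsCompact K) :
    TendstoUniformlyOn v u (𝓝[>] 0) K := by
  rcases K.eq_empty_or_nonempty with rfl | hne
  · exact tendstoUniformlyOn_empty
  obtain ⟨b, hb, hKb⟩ := exists_mem_Ico_subset_Icc_of_isCompact hKc hne hK
  have hI : Icc t₀ b ⊆ Ico t₀ t₁ := Icc_subset_Ico_right hb.2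
  have hIE : Icc t₀ b ×ˢ (univ : Set E) ⊆ Ico t₀ t₁ ×ˢ univ := prod_mono_left hI
  have hderiv : ∀ t ∈ Icc t₀ b, ∀ x, HasFDerivAt (g t) (fderiv ℝ (g t) x) x := fun t ht x ↦
    (differentiable_of_differentiableOn_uncurry (hg.differentiableOn one_ne_zero)
      (hI ht) x).hasFDerivAt
  have haway : ∀ᶠ z in 𝓝[≠] 0, ∀ t ∈ Icc t₀ b, 0 < ⟪g t (u t + z), z⟫ :=
    eventually_forall_inner_pos_of_fderiv_pos isCompact_Icc hderiv
      ((contDiffOn_uncurry_fderiv (m := 0) hg).continuousOn.mono hIE) (hu.continuousOn.mono hI)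
      (fun t ht ↦ hzero t (hI ht)) (fun t ht ↦ hpos t (hI ht))
  obtain ⟨M, hM⟩ := isCompact_Icc.exists_bound_of_continuousOn
    ((hu.continuousOn_derivWithin (uniqueDiffOn_Ico t₀ t₁) le_rfl).mono hI)
  exact (tendstoUniformlyOn_Icc_of_inner_pos (hg.continuousOn.mono hIE)
    (fun t ht ↦ (hu.differentiableOn one_ne_zero t (hI ht)).hasDerivWithinAt.mono hI) hM haway
    (fun ε hε t ht ↦ (hv ε hε t (hI ht)).mono hI) hinit).mono hKb

/-- if `u` is a `C¹` branch of nondegenerate local minima on `[0,t₁)`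
and `u_ε` solves `ε u̇_ε = −∇ₓf(t,u_ε)` with `u_ε(0) → u(0)`, then `u_ε → u`
uniformly on every compact subset of `[0,t₁)`. -/
theorem convergence_on_compacts_before_first_critical_time
    {n : ℕ} (hn : 1 ≤ n) {T : ℝ} (hT : 0 < T)
    (f : ℝ → EuclideanSpace ℝ (Fin n) → ℝ)
    (hf : ContDiffOn ℝ 3 (Function.uncurry f)
      (Set.Icc 0 T ×ˢ (Set.univ : Set (EuclideanSpace ℝ (Fin n)))))
    {a₀ c₀ : ℝ} (ha₀ : 0 ≤ a₀) (hc₀ : 0 < c₀)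
    (hA1 : ∀ t ∈ Set.Icc (0:ℝ) T, ∀ x : EuclideanSpace ℝ (Fin n),
      ⟪gradient (f t) x, x⟫ ≥ c₀ * ‖x‖ ^ 2 - a₀)
    (t₁ : ℝ) (ht₁ : 0 < t₁) (ht₁T : t₁ ≤ T)
    (u : ℝ → EuclideanSpace ℝ (Fin n))
    (hu : ContDiffOn ℝ 1 u (Set.Ico 0 t₁))
    (hcrit : ∀ t ∈ Set.Ico (0:ℝ) t₁, gradient (f t) (u t) = 0)
    (hpd : ∀ t ∈ Set.Ico (0:ℝ) t₁, ∀ y : EuclideanSpace ℝ (Fin n), y ≠ 0 →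
      0 < ⟪(fderiv ℝ (gradient (f t)) (u t)) y, y⟫)
    (uε : ℝ → ℝ → EuclideanSpace ℝ (Fin n))
    (hode : ∀ ε : ℝ, 0 < ε → ∀ t ∈ Set.Icc (0:ℝ) T,
      HasDerivWithinAt (uε ε) (-(ε⁻¹ • gradient (f t) (uε ε t))) (Set.Icc 0 T) t)
    (hinit : Tendsto (fun ε : ℝ => uε ε 0) (nhdsWithin 0 (Set.Ioi 0)) (nhds (u 0))) :
    ∀ K : Set ℝ, K ⊆ Set.Ico 0 t₁ → IsCompact K →
      TendstoUniformlyOn (fun ε t => uε ε t) u (nhdsWithin 0 (Set.Ioi 0)) K := by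
  have hsub : Ico 0 t₁ ⊆ Icc 0 T := Ico_subset_Icc_self.trans (Icc_subset_Icc_right ht₁T)
  exact fun _ ↦ convergence_on_compacts_before_first_critical_time_general
    (contDiffOn_uncurry_gradient ((hf.of_le (by norm_num)).mono (prod_mono_left hsub))) hu hcrit
    hpd (fun ε hε t ht ↦ (hode ε hε t (hsub ht)).mono hsub) hinit
end
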